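/- arXiv:2301.13710 — 2 statements merged into one kernel-verified Lean document; each statement's English description precedes it below -/
import Mathlib

section
/- Let q* > 0, γ ∈ (0,1], σ_α ≥ 0, σ_b ≥ 0, and let φ : ℝ → ℝ be continuously differentiable with both φ and φ′ of at most polynomial growth. Then for every c ∈ (−1,1) the correlation map C is differentiable at c, with C′(c) = γ σ_α² ∫∫ φ′(√q* z₁) φ′(√q*(c z₁ + √(1−c²) z₂)) Dz₁ Dz₂. -/
open MeasureTheory ProbabilityTheory Filter
open scoped NNReal ENNReal

/-!
Write `c = cos θ` and let `X`, `Y` be independent centred Gaussians of variance `v`. Rotating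
`(X, Y)` by `θ` gives `U = cos θ X + sin θ Y` and `V = -sin θ X + cos θ Y = ∂U/∂θ`, so the
`θ`-derivative of `E[f(X) g(U)]` is `E[f(X) g'(U) V]`. By rotation invariance `U` and `V` are again
independent centred Gaussians of variance `v`, and `X = cos θ U - sin θ V`; Stein's identity
(Gaussian integration by parts) in `V` therefore turns the derivative into
`-v sin θ E[f'(X) g'(U)]`, and the factor `-sin θ` cancels in the chain rule for `θ = arccos c`.
The correlation map is the case `f = g = φ`, `v = q*`.
-/

section PolynomiallyBounded

variable {α β E F G : Type*} [SeminormedAddCommGroup E] [SeminormedAddCommGroup F]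
  [SeminormedAddCommGroup G]

/-- `f` grows at most polynomially in `‖w‖`. The case `w = id` is polynomial growth of a function
on a normed space; `w = Prod.snd` is polynomial growth in the second variable, uniformly in the
first. -/
def PolynomiallyBounded (f : α → F) (w : α → E) : Prop :=
  ∃ (K : ℝ) (k : ℕ), ∀ a, ‖f a‖ ≤ K * (1 + ‖w a‖) ^ k

namespace PolynomiallyBounded

lemma exists_nonneg {f : α → F} {w : α → E} (h : PolynomiallyBounded f w) :
    ∃ (K : ℝ) (k : ℕ), 0 ≤ K ∧ ∀ a, ‖f a‖ ≤ K * (1 + ‖w a‖) ^ k := by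
  obtain ⟨K, k, hK⟩ := h
  exact ⟨|K|, k, abs_nonneg K, fun a => (hK a).trans (by gcongr; exact le_abs_self K)⟩

lemma of_norm_le_mul {f : α → F} {w : α → E} {C : ℝ} (h : ∀ a, ‖f a‖ ≤ C * ‖w a‖) :
    PolynomiallyBounded f w :=
  ⟨|C|, 1, fun a => (h a).trans (by
    rw [pow_one]
    gcongr
    · exact le_abs_self C
    · linarith)⟩

lemma comp {f : α → F} {w : α → E} (h : PolynomiallyBounded f w) (u : β → α) :
    PolynomiallyBounded (fun b => f (u b)) (fun b => w (u b)) := by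
  obtain ⟨K, k, hK⟩ := h
  exact ⟨K, k, fun b => hK (u b)⟩

lemma trans {f : α → F} {u : α → G} {w : α → E} (hf : PolynomiallyBounded f u)
    (hu : PolynomiallyBounded u w) : PolynomiallyBounded f w := by
  obtain ⟨K, k, hK0, hK⟩ := hf.exists_nonneg
  obtain ⟨L, l, hL⟩ := hu
  refine ⟨K * (1 + L) ^ k, l * k, fun a => ?_⟩
  have one_le : 1 ≤ (1 + ‖w a‖) ^ l := one_le_pow₀ (by linarith [norm_nonneg (w a)])
  calc ‖f a‖ ≤ K * (1 + ‖u a‖) ^ k := hK a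
    _ ≤ K * ((1 + L) * (1 + ‖w a‖) ^ l) ^ k := by gcongr; linarith [hL a]
    _ = K * (1 + L) ^ k * (1 + ‖w a‖) ^ (l * k) := by rw [mul_pow, ← pow_mul, mul_assoc]

lemma mul {A : Type*} [SeminormedRing A] {f g : α → A} {w : α → E} (hf : PolynomiallyBounded f w)
    (hg : PolynomiallyBounded g w) : PolynomiallyBounded (fun a => f a * g a) w := by
  obtain ⟨K, k, hK0, hK⟩ := hf.exists_nonneg
  obtain ⟨L, l, hL⟩ := hg
  refine ⟨K * L, k + l, fun a => ?_⟩
  calc ‖f a * g a‖ ≤ ‖f a‖ * ‖g a‖ := norm_mul_le _ _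
    _ ≤ (K * (1 + ‖w a‖) ^ k) * (L * (1 + ‖w a‖) ^ l) := by gcongr; exacts [hK a, hL a]
    _ = K * L * (1 + ‖w a‖) ^ (k + l) := by ring

lemma of_deriv {F : Type*} [NormedAddCommGroup F] [NormedSpace ℝ F] {f : ℝ → F}
    (hf : Differentiable ℝ f) (hf' : PolynomiallyBounded (deriv f) id) :
    PolynomiallyBounded f id := by
  obtain ⟨K, k, hK0, hK⟩ := hf'.exists_nonneg
  refine ⟨‖f 0‖ + K, k + 1, fun x => ?_⟩
  have one_le : 1 ≤ (1 + ‖x‖) ^ (k + 1) := one_le_pow₀ (by linarith [norm_nonneg x])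
  have mean_value : ‖f x - f 0‖ ≤ K * (1 + ‖x‖) ^ k * ‖x - 0‖ :=
    (convex_closedBall (0 : ℝ) ‖x‖).norm_image_sub_le_of_norm_deriv_le
      (fun y _ => hf y)
      (fun y hy => (hK y).trans (by
        have : ‖y‖ ≤ ‖x‖ := by simpa using hy
        simp only [id]
        gcongr))
      (by simp) (by simp)
  calc ‖f x‖ ≤ ‖f 0‖ + ‖f x - f 0‖ := norm_le_norm_add_norm_sub' _ _
    _ ≤ ‖f 0‖ * (1 + ‖x‖) ^ (k + 1) + K * (1 + ‖x‖) ^ k * (1 + ‖x‖) := by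
        rw [sub_zero] at mean_value
        gcongr
        · exact le_mul_of_one_le_right (norm_nonneg _) one_le
        · exact mean_value.trans (by gcongr; linarith)
    _ = (‖f 0‖ + K) * (1 + ‖x‖) ^ (k + 1) := by ring

lemma fst : PolynomiallyBounded (Prod.fst : E × F → E) id :=
  of_norm_le_mul (C := 1) fun p => (norm_fst_le p).trans_eq (one_mul _).symm

lemma snd : PolynomiallyBounded (Prod.snd : E × F → F) id :=
  of_norm_le_mul (C := 1) fun p => (norm_snd_le p).trans_eq (one_mul _).symm

lemma rotation [NormedSpace ℝ E] :
    PolynomiallyBounded (fun q : ℝ × (E × E) => ContinuousLinearMap.rotation q.1 q.2) Prod.snd := by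
  refine of_norm_le_mul (C := 2) fun ⟨θ, p⟩ => ?_
  have combination_le {a b : ℝ} (ha : |a| ≤ 1) (hb : |b| ≤ 1) : ‖a • p.1 + b • p.2‖ ≤ 2 * ‖p‖ :=
    calc ‖a • p.1 + b • p.2‖ ≤ |a| * ‖p.1‖ + |b| * ‖p.2‖ := by
          simpa only [norm_smul, Real.norm_eq_abs] using norm_add_le (a • p.1) (b • p.2)
      _ ≤ 1 * ‖p‖ + 1 * ‖p‖ := by gcongr; exacts [norm_fst_le p, norm_snd_le p]
      _ = 2 * ‖p‖ := by ring
  exact norm_prod_le_iff.2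
    ⟨combination_le (Real.abs_cos_le_one θ) (Real.abs_sin_le_one θ),
      combination_le ((abs_neg _).trans_le (Real.abs_sin_le_one θ)) (Real.abs_cos_le_one θ)⟩

lemma rotation_fst [NormedSpace ℝ E] :
    PolynomiallyBounded (fun q : ℝ × (E × E) => (ContinuousLinearMap.rotation q.1 q.2).1)
      Prod.snd :=
  (fst.comp _).trans rotation

lemma rotation_snd [NormedSpace ℝ E] :
    PolynomiallyBounded (fun q : ℝ × (E × E) => (ContinuousLinearMap.rotation q.1 q.2).2)
      Prod.snd :=
  (snd.comp _).trans rotation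

lemma mul_comp_rotation_fst [NormedSpace ℝ E] {A : Type*} [SeminormedRing A] {f g : E → A}
    (hf : PolynomiallyBounded f id) (hg : PolynomiallyBounded g id) :
    PolynomiallyBounded
      (fun q : ℝ × (E × E) => f q.2.1 * g (ContinuousLinearMap.rotation q.1 q.2).1) Prod.snd :=
  ((hf.comp _).trans (fst.comp _)).mul ((hg.comp _).trans rotation_fst)

end PolynomiallyBounded

end PolynomiallyBounded

section IsGaussian

variable {E F : Type*} [NormedAddCommGroup E] [NormedSpace ℝ E] [CompleteSpace E]
  [SecondCountableTopology E] [MeasurableSpace E] [BorelSpace E] [NormedAddCommGroup F]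
  {μ : Measure E} [IsGaussian μ]

lemma integrable_one_add_norm_pow_of_isGaussian (k : ℕ) :
    Integrable (fun x : E => (1 + ‖x‖) ^ k) μ := by
  have h : MemLp (fun x : E => 1 + ‖x‖) k μ :=
    (memLp_const (1 : ℝ)).add (IsGaussian.memLp_id μ k (ENNReal.natCast_ne_top k)).norm
  refine h.integrable_norm_pow'.congr (ae_of_all _ fun x => ?_)
  have : 0 ≤ 1 + ‖x‖ := by positivity
  simp only [Real.norm_eq_abs, abs_of_nonneg this]

lemma PolynomiallyBounded.integrable {f : E → F} (hf : PolynomiallyBounded f id)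
    (hfm : AEStronglyMeasurable f μ) : Integrable f μ := by
  obtain ⟨K, k, hK⟩ := hf
  exact ((integrable_one_add_norm_pow_of_isGaussian k).const_mul K).mono' hfm (ae_of_all _ hK)

lemma hasDerivAt_integral_of_polynomiallyBounded [NormedSpace ℝ F] {f f' : ℝ → E → F}
    (hf : PolynomiallyBounded (fun q : ℝ × E => f q.1 q.2) Prod.snd)
    (hf' : PolynomiallyBounded (fun q : ℝ × E => f' q.1 q.2) Prod.snd)
    (hfm : ∀ t, AEStronglyMeasurable (f t) μ) (hfm' : ∀ t, AEStronglyMeasurable (f' t) μ)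
    (hderiv : ∀ t x, HasDerivAt (fun t => f t x) (f' t x) t) (t : ℝ) :
    HasDerivAt (fun t => ∫ x, f t x ∂μ) (∫ x, f' t x ∂μ) t := by
  obtain ⟨K, k, hK⟩ := hf'
  exact (hasDerivAt_integral_of_dominated_loc_of_deriv_le univ_mem (Eventually.of_forall hfm)
    ((hf.comp (Prod.mk t)).integrable (hfm t)) (hfm' t)
    (ae_of_all _ fun x s _ => hK (s, x))
    ((integrable_one_add_norm_pow_of_isGaussian k).const_mul K)
    (ae_of_all _ fun x s _ => hderiv s x)).2

end IsGaussian

section GaussianIntegrationByParts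

variable {m : ℝ} {v : ℝ≥0}

lemma integrable_mul_gaussianPDFReal (hv : v ≠ 0) {f : ℝ → ℝ}
    (hf : Integrable f (gaussianReal m v)) :
    Integrable (fun x => f x * gaussianPDFReal m v x) := by
  rw [gaussianReal_of_var_ne_zero _ hv, integrable_withDensity_iff (measurable_gaussianPDF _ _)
    (ae_of_all _ fun _ => gaussianPDF_lt_top)] at hf
  simpa only [toReal_gaussianPDF] using hf

lemma hasDerivAt_gaussianPDFReal (m : ℝ) (v : ℝ≥0) (x : ℝ) :
    HasDerivAt (gaussianPDFReal m v) (-((x - m) / v) * gaussianPDFReal m v x) x := by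
  have exponent : HasDerivAt (fun x : ℝ => -(x - m) ^ 2 / (2 * v)) (-((x - m) / v)) x := by
    convert! (((hasDerivAt_id x).sub_const m).pow 2).neg.div_const (2 * (v : ℝ)) using 1
    simp only [id, Nat.cast_ofNat, Nat.reduceSub, pow_one, mul_one]
    rw [← mul_neg, mul_div_mul_left _ _ two_ne_zero, neg_div]
  rw [gaussianPDFReal_def]
  convert! exponent.exp.const_mul _ using 1
  ring

lemma integral_sub_mul_gaussianReal {f f' : ℝ → ℝ} (hf : ∀ x, HasDerivAt f (f' x) x)
    (hint : Integrable f (gaussianReal m v)) (hint' : Integrable f' (gaussianReal m v))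
    (hmul : Integrable (fun x => (x - m) * f x) (gaussianReal m v)) :
    ∫ x, (x - m) * f x ∂(gaussianReal m v) = v * ∫ x, f' x ∂(gaussianReal m v) := by
  rcases eq_or_ne v 0 with rfl | hv
  · simp
  have by_parts := integral_mul_deriv_eq_deriv_mul_of_integrable
    (fun x _ => hf x) (fun x _ => hasDerivAt_gaussianPDFReal m v x)
    (((integrable_mul_gaussianPDFReal hv hmul).const_mul (-(v : ℝ)⁻¹)).congr
      (ae_of_all _ fun x => by simp only [Pi.mul_apply]; ring))
    (integrable_mul_gaussianPDFReal hv hint') (integrable_mul_gaussianPDFReal hv hint)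
  simp only [integral_gaussianReal_eq_integral_smul hv, smul_eq_mul]
  calc ∫ x, gaussianPDFReal m v x * ((x - m) * f x)
      = -v * ∫ x, f x * (-((x - m) / v) * gaussianPDFReal m v x) := by
        rw [← integral_const_mul]
        congr 1 with x
        field_simp
    _ = v * ∫ x, gaussianPDFReal m v x * f' x := by
        rw [by_parts, neg_mul_neg]
        simp only [mul_comm]

lemma integral_prod_sub_mul_gaussianReal {α : Type*} [MeasurableSpace α] {μ : Measure α}
    [SFinite μ] {F F' : α × ℝ → ℝ} (hF : ∀ x y, HasDerivAt (fun y => F (x, y)) (F' (x, y)) y)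
    (hint : Integrable F (μ.prod (gaussianReal m v)))
    (hint' : Integrable F' (μ.prod (gaussianReal m v)))
    (hmul : Integrable (fun p => (p.2 - m) * F p) (μ.prod (gaussianReal m v))) :
    ∫ p, (p.2 - m) * F p ∂(μ.prod (gaussianReal m v)) =
      v * ∫ p, F' p ∂(μ.prod (gaussianReal m v)) := by
  rw [integral_prod _ hmul, integral_prod _ hint', ← integral_const_mul]
  refine integral_congr_ae ?_
  filter_upwards [hint.prod_right_ae, hint'.prod_right_ae, hmul.prod_right_ae] with x hx hx' hxm
  exact integral_sub_mul_gaussianReal (hF x) hx hx' hxm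

end GaussianIntegrationByParts

section Rotation

variable {E : Type*} [NormedAddCommGroup E] [NormedSpace ℝ E]

lemma rotation_neg_rotation (θ : ℝ) (p : E × E) :
    ContinuousLinearMap.rotation (-θ) (ContinuousLinearMap.rotation θ p) = p := by
  ext
  · simp only [ContinuousLinearMap.rotation_apply, Real.cos_neg, Real.sin_neg]
    match_scalars <;> linarith [Real.sin_sq_add_cos_sq θ]
  · simp only [ContinuousLinearMap.rotation_apply, Real.cos_neg, Real.sin_neg]
    match_scalars <;> linarith [Real.sin_sq_add_cos_sq θ]

lemma hasDerivAt_rotation_fst (θ : ℝ) (p : E × E) :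
    HasDerivAt (fun θ => (ContinuousLinearMap.rotation θ p).1)
      (ContinuousLinearMap.rotation θ p).2 θ :=
  ((Real.hasDerivAt_cos θ).smul_const p.1).add ((Real.hasDerivAt_sin θ).smul_const p.2)

lemma hasDerivAt_rotation_mk_fst (θ x y : ℝ) :
    HasDerivAt (fun y => (ContinuousLinearMap.rotation θ (x, y)).1) (Real.sin θ) y := by
  simpa [ContinuousLinearMap.rotation_apply] using
    ((hasDerivAt_id y).const_mul (Real.sin θ)).const_add (Real.cos θ * x)

variable [CompleteSpace E] [SecondCountableTopology E] [MeasurableSpace E] [BorelSpace E]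
  {F : Type*} [NormedAddCommGroup F] [NormedSpace ℝ F] {μ : Measure E} [IsGaussian μ]

lemma integral_comp_rotation (hμ : μ[id] = 0) (θ : ℝ) {f : E × E → F}
    (hf : AEStronglyMeasurable f (μ.prod μ)) :
    ∫ p, f (ContinuousLinearMap.rotation θ p) ∂(μ.prod μ) = ∫ p, f p ∂(μ.prod μ) := by
  rw [← IsGaussian.map_rotation_eq_self hμ θ] at hf
  rw [← integral_map (by fun_prop) hf, IsGaussian.map_rotation_eq_self hμ θ]

lemma integral_rotation_eq_integral_rotation_neg (hμ : μ[id] = 0) (θ : ℝ)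
    {H : E × E → E × E → F}
    (hH : AEStronglyMeasurable (fun p => H (ContinuousLinearMap.rotation (-θ) p) p) (μ.prod μ)) :
    ∫ p, H p (ContinuousLinearMap.rotation θ p) ∂(μ.prod μ) =
      ∫ p, H (ContinuousLinearMap.rotation (-θ) p) p ∂(μ.prod μ) := by
  simpa only [rotation_neg_rotation] using integral_comp_rotation hμ θ hH

end Rotation

section GaussianCorrelation

variable {v : ℝ≥0} {f g : ℝ → ℝ}

lemma integrable_mul_comp_rotation_fst {μ : Measure (ℝ × ℝ)} [IsGaussian μ]
    (hf : PolynomiallyBounded f id) (hfm : Measurable f) (hg : PolynomiallyBounded g id)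
    (hgm : Measurable g) (θ : ℝ) :
    Integrable (fun p => f p.1 * g (ContinuousLinearMap.rotation θ p).1) μ :=
  ((hf.mul_comp_rotation_fst hg).comp (Prod.mk θ)).integrable
    (Measurable.aestronglyMeasurable (by fun_prop))

lemma hasDerivAt_integral_mul_comp_rotation_fst {μ : Measure (ℝ × ℝ)} [IsGaussian μ]
    (hf : PolynomiallyBounded f id) (hfm : Measurable f) (hg : Differentiable ℝ g)
    (hg' : PolynomiallyBounded (deriv g) id) (θ : ℝ) :
    HasDerivAt (fun θ => ∫ p, f p.1 * g (ContinuousLinearMap.rotation θ p).1 ∂μ)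
      (∫ p, (ContinuousLinearMap.rotation θ p).2 *
        (f p.1 * deriv g (ContinuousLinearMap.rotation θ p).1) ∂μ) θ := by
  have hgm : Measurable g := hg.continuous.measurable
  refine hasDerivAt_integral_of_polynomiallyBounded
    (f := fun θ p => f p.1 * g (ContinuousLinearMap.rotation θ p).1)
    (f' := fun θ p => (ContinuousLinearMap.rotation θ p).2 *
      (f p.1 * deriv g (ContinuousLinearMap.rotation θ p).1))
    (hf.mul_comp_rotation_fst (.of_deriv hg hg'))
    (PolynomiallyBounded.rotation_snd.mul (hf.mul_comp_rotation_fst hg'))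
    (fun θ => Measurable.aestronglyMeasurable (by fun_prop))
    (fun θ => Measurable.aestronglyMeasurable (by fun_prop))
    (fun θ p => ?_) θ
  convert! ((hg _).hasDerivAt.comp θ (hasDerivAt_rotation_fst θ p)).const_mul (f p.1) using 1
  ring

lemma integral_snd_mul_comp_rotation_fst {μ : Measure ℝ} [IsGaussian μ]
    (hf : PolynomiallyBounded f id) (hfm : Measurable f) (hg : Differentiable ℝ g)
    (hg' : PolynomiallyBounded (deriv g) id) (θ : ℝ) :
    ∫ p, p.2 * (f p.1 * g (ContinuousLinearMap.rotation θ p).1) ∂(μ.prod (gaussianReal 0 v)) =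
      v * Real.sin θ * ∫ p, f p.1 * deriv g (ContinuousLinearMap.rotation θ p).1
        ∂(μ.prod (gaussianReal 0 v)) := by
  have hgb : PolynomiallyBounded g id := .of_deriv hg hg'
  have hgm : Measurable g := hg.continuous.measurable
  have hderiv (x y : ℝ) :
      HasDerivAt (fun y => f x * g (ContinuousLinearMap.rotation θ (x, y)).1)
        (Real.sin θ * (f x * deriv g (ContinuousLinearMap.rotation θ (x, y)).1)) y := by
    convert! ((hg _).hasDerivAt.comp y (hasDerivAt_rotation_mk_fst θ x y)).const_mul (f x) using 1
    ring
  have hmul : Integrable (fun p => p.2 * (f p.1 * g (ContinuousLinearMap.rotation θ p).1))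
      (μ.prod (gaussianReal 0 v)) :=
    (PolynomiallyBounded.snd.mul ((hf.mul_comp_rotation_fst hgb).comp (Prod.mk θ))).integrable
      (Measurable.aestronglyMeasurable (by fun_prop))
  have hstein := integral_prod_sub_mul_gaussianReal (μ := μ) (m := 0) (v := v) hderiv
    (integrable_mul_comp_rotation_fst hf hfm hgb hgm θ)
    ((integrable_mul_comp_rotation_fst hf hfm hg' (measurable_deriv g) θ).const_mul _)
    (by simpa only [sub_zero] using hmul)
  simpa only [sub_zero, integral_const_mul, mul_assoc] using hstein

lemma integral_rotation_snd_mul_comp_rotation_fst (hf : Differentiable ℝ f)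
    (hf' : PolynomiallyBounded (deriv f) id) (hg : PolynomiallyBounded g id) (hgm : Measurable g)
    (θ : ℝ) :
    ∫ p, (ContinuousLinearMap.rotation θ p).2 * (f p.1 * g (ContinuousLinearMap.rotation θ p).1)
        ∂((gaussianReal 0 v).prod (gaussianReal 0 v)) =
      -(v * Real.sin θ) * ∫ p, deriv f p.1 * g (ContinuousLinearMap.rotation θ p).1
        ∂((gaussianReal 0 v).prod (gaussianReal 0 v)) := by
  have hfm : Measurable f := hf.continuous.measurable
  have hcentred : (gaussianReal 0 v)[id] = 0 := by simp
  simp only [mul_comm (f _), mul_comm (deriv f _)]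
  rw [integral_rotation_eq_integral_rotation_neg hcentred θ (H := fun p q => q.2 * (g q.1 * f p.1))
      (Measurable.aestronglyMeasurable (by fun_prop)),
    integral_rotation_eq_integral_rotation_neg hcentred θ (H := fun p q => g q.1 * deriv f p.1)
      (Measurable.aestronglyMeasurable (by fun_prop)),
    integral_snd_mul_comp_rotation_fst hg hgm hf hf', Real.sin_neg, mul_neg]

/-- `E[f(X) g(c X + √(1 - c²) Y)]` for independent `X, Y ∼ N(0, v)`: the correlation of `f` and `g`
along two centred Gaussians of variance `v` and correlation coefficient `c`. -/
noncomputable def gaussianCorrelation (v : ℝ≥0) (f g : ℝ → ℝ) (c : ℝ) : ℝ :=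
  ∫ x, ∫ y, f x * g (c * x + √(1 - c ^ 2) * y) ∂(gaussianReal 0 v) ∂(gaussianReal 0 v)

lemma gaussianCorrelation_eq_integral_rotation (hf : PolynomiallyBounded f id) (hfm : Measurable f)
    (hg : PolynomiallyBounded g id) (hgm : Measurable g) {c : ℝ} (hc : c ∈ Set.Icc (-1) 1) :
    gaussianCorrelation v f g c =
      ∫ p, f p.1 * g (ContinuousLinearMap.rotation (Real.arccos c) p).1
        ∂((gaussianReal 0 v).prod (gaussianReal 0 v)) := by
  rw [integral_prod _ (integrable_mul_comp_rotation_fst hf hfm hg hgm _)]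
  simp only [gaussianCorrelation, ContinuousLinearMap.rotation_apply, smul_eq_mul,
    Real.cos_arccos hc.1 hc.2, Real.sin_arccos]

theorem hasDerivAt_gaussianCorrelation (hf : Differentiable ℝ f)
    (hf' : PolynomiallyBounded (deriv f) id) (hg : Differentiable ℝ g)
    (hg' : PolynomiallyBounded (deriv g) id) {c : ℝ} (hc : c ∈ Set.Ioo (-1) 1) :
    HasDerivAt (gaussianCorrelation v f g) (v * gaussianCorrelation v (deriv f) (deriv g) c) c := by
  have hfb := PolynomiallyBounded.of_deriv hf hf'
  have hgb := PolynomiallyBounded.of_deriv hg hg'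
  have hfm := hf.continuous.measurable
  have hgm := hg.continuous.measurable
  have hsin : Real.sin (Real.arccos c) ≠ 0 :=
    (Real.sin_pos_of_pos_of_lt_pi (Real.arccos_pos.2 hc.2) (Real.arccos_lt_pi.2 hc.1)).ne'
  have hchain := (hasDerivAt_integral_mul_comp_rotation_fst
    (μ := (gaussianReal 0 v).prod (gaussianReal 0 v)) hfb hfm hg hg' _).comp c
    (Real.hasDerivAt_arccos hc.1.ne' hc.2.ne)
  rw [integral_rotation_snd_mul_comp_rotation_fst hf hf' hg' (measurable_deriv g),
    ← gaussianCorrelation_eq_integral_rotation hf' (measurable_deriv f) hg' (measurable_deriv g)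
      (Set.Ioo_subset_Icc_self hc), ← Real.sin_arccos] at hchain
  convert! hchain.congr_of_eventuallyEq ?_ using 1
  · field_simp
  · filter_upwards [Ioo_mem_nhds hc.1 hc.2] with x hx
    exact gaussianCorrelation_eq_integral_rotation hfb hfm hgb hgm (Set.Ioo_subset_Icc_self hx)

lemma integral_gaussianReal_eq_integral_sqrt_mul {F : Type*} [NormedAddCommGroup F]
    [NormedSpace ℝ F] [CompleteSpace F] (v : ℝ≥0) (h : ℝ → F) :
    ∫ x, h x ∂(gaussianReal 0 v) = ∫ z, h (√v * z) ∂(gaussianReal 0 1) := by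
  rcases eq_or_ne v 0 with rfl | hv
  · simp
  have hmap : (gaussianReal 0 1).map (√v * ·) = gaussianReal 0 v := by
    rw [gaussianReal_map_const_mul, mul_zero, mul_one]
    congr 1
    exact NNReal.eq (Real.sq_sqrt v.2)
  rw [← hmap, (measurableEmbedding_mulLeft₀ (by simpa using hv)).integral_map]

lemma gaussianCorrelation_eq_integral_standard (v : ℝ≥0) (f g : ℝ → ℝ) (c : ℝ) :
    gaussianCorrelation v f g c = ∫ z₁, ∫ z₂, f (√v * z₁) * g (√v * (c * z₁ + √(1 - c ^ 2) * z₂))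
      ∂(gaussianReal 0 1) ∂(gaussianReal 0 1) := by
  simp only [gaussianCorrelation, integral_gaussianReal_eq_integral_sqrt_mul v, mul_add,
    mul_left_comm]

end GaussianCorrelation

theorem correlation_map_deriv_general (γ σα σb qs : ℝ) (hqs : 0 < qs) (φ : ℝ → ℝ)
    (hφ : Differentiable ℝ φ)
    (hφ'growth : ∃ (K : ℝ) (k : ℕ), ∀ x : ℝ, |deriv φ x| ≤ K * (1 + |x|) ^ k) :
    ∀ c ∈ Set.Ioo (-1 : ℝ) 1,
      HasDerivAt
        (fun c : ℝ => (γ / qs) * (σα ^ 2 *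
          ∫ z₁, ∫ z₂, φ (Real.sqrt qs * z₁) *
            φ (Real.sqrt qs * (c * z₁ + Real.sqrt (1 - c ^ 2) * z₂))
            ∂(gaussianReal 0 1) ∂(gaussianReal 0 1) + σb ^ 2))
        (γ * σα ^ 2 *
          ∫ z₁, ∫ z₂, deriv φ (Real.sqrt qs * z₁) *
            deriv φ (Real.sqrt qs * (c * z₁ + Real.sqrt (1 - c ^ 2) * z₂))
            ∂(gaussianReal 0 1) ∂(gaussianReal 0 1))
        c := by
  intro c hc
  lift qs to ℝ≥0 using hqs.le
  have hφ'b : PolynomiallyBounded (deriv φ) id := hφ'growth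
  simp only [← gaussianCorrelation_eq_integral_standard]
  have hderiv := hasDerivAt_gaussianCorrelation (v := qs) hφ hφ'b hφ hφ'b hc
  convert! ((hderiv.const_mul (σα ^ 2)).add_const (σb ^ 2)).const_mul (γ / qs) using 1
  field_simp

/-- for φ C¹ with φ, φ′ of polynomial growth, the correlation map
C(c) = (γ/q*)(σα² ∫∫ φ(√q* z₁) φ(√q*(c z₁ + √(1−c²) z₂)) Dz₁ Dz₂ + σb²)
is differentiable on (−1,1) with
C′(c) = γ σα² ∫∫ φ′(√q* z₁) φ′(√q*(c z₁ + √(1−c²) z₂)) Dz₁ Dz₂. -/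
theorem correlation_map_deriv
    (γ σα σb qs : ℝ) (hγ : γ ∈ Set.Ioc (0 : ℝ) 1) (hσα : 0 ≤ σα) (hσb : 0 ≤ σb)
    (hqs : 0 < qs)
    (φ : ℝ → ℝ) (hφ : ContDiff ℝ 1 φ)
    (hφgrowth : ∃ (K : ℝ) (k : ℕ), ∀ x : ℝ, |φ x| ≤ K * (1 + |x|) ^ k)
    (hφ'growth : ∃ (K : ℝ) (k : ℕ), ∀ x : ℝ, |deriv φ x| ≤ K * (1 + |x|) ^ k) :
    ∀ c ∈ Set.Ioo (-1 : ℝ) 1,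
      HasDerivAt
        (fun c : ℝ => (γ / qs) * (σα ^ 2 *
          ∫ z₁, ∫ z₂, φ (Real.sqrt qs * z₁) *
            φ (Real.sqrt qs * (c * z₁ + Real.sqrt (1 - c ^ 2) * z₂))
            ∂(gaussianReal 0 1) ∂(gaussianReal 0 1) + σb ^ 2))
        (γ * σα ^ 2 *
          ∫ z₁, ∫ z₂, deriv φ (Real.sqrt qs * z₁) *
            deriv φ (Real.sqrt qs * (c * z₁ + Real.sqrt (1 - c ^ 2) * z₂))
            ∂(gaussianReal 0 1) ∂(gaussianReal 0 1))
        c := by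
  exact correlation_map_deriv_general γ σα σb qs hqs φ (hφ.differentiable one_ne_zero) hφ'growth
end

section
/- Fix N_l, N_{l+1} ∈ ℕ, γ ∈ (0,1], σ_α ≥ 0, q* > 0, and let φ : ℝ → ℝ be continuously differentiable with ∫ (φ′(√q* z))² Dz < ∞. Let δ₁, …, δ_{N_{l+1}} be identically distributed square-integrable random variables with common second moment q̃ := E[δ₁²]; let W₁, …, W_{N_{l+1}} be square-integrable random variables with E[W_k] = 0, E[W_k W_{k′}] = 0 for k ≠ k′, and E[W_k²] = γ σ_α²/N_l for all k, with the vector (W_k) independent of the vector (δ_k); and let h be a random variable with distribution N(0, q*) independent of ((δ_k), (W_k)). Then the random variable δ′ := (Σ_{k=1}^{N_{l+1}} δ_k W_k) φ′(h) satisfies E[(δ′)²] = q̃ · (N_{l+1}/N_l) · γ σ_α² ∫ (φ′(√q* z))² Dz = q̃ · (N_{l+1}/N_l) · χ_γ. -/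
open MeasureTheory ProbabilityTheory Filter
open scoped NNReal ENNReal

/-!
Expanding `(∑ k, δ k * W k) ^ 2`, the `(k, k')` cross term has expectation
`E[δ k * δ k'] * E[W k * W k']` by independence, and the second factor vanishes for `k ≠ k'`, so
only the diagonal survives. The factor `φ' (h)` splits off by independence, and `h` has the law of
`√q* * z` with `z` standard Gaussian.
-/

section IndepFun

variable {Ω : Type*} [MeasurableSpace Ω] {μ : Measure Ω}

theorem memLp_mul_of_indepFun {𝕜 : Type*} [NormedDivisionRing 𝕜] [MeasurableSpace 𝕜]
    [OpensMeasurableSpace 𝕜] {p : ℝ≥0∞} {X Y : Ω → 𝕜} (hXY : IndepFun X Y μ)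
    (hX : MemLp X p μ) (hY : MemLp Y p μ) : MemLp (fun ω => X ω * Y ω) p μ := by
  have hmeas : AEStronglyMeasurable (fun ω => X ω * Y ω) μ := hX.1.mul hY.1
  rcases eq_or_ne p 0 with rfl | hp_zero
  · exact memLp_zero_iff_aestronglyMeasurable.2 hmeas
  rcases eq_or_ne p ∞ with rfl | hp_top
  · exact hY.mul hX
  have hindep : IndepFun (fun ω => ‖X ω‖ ^ p.toReal) (fun ω => ‖Y ω‖ ^ p.toReal) μ :=
    hXY.comp (measurable_norm.pow_const _) (measurable_norm.pow_const _)
  rw [← integrable_norm_rpow_iff hmeas hp_zero hp_top]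
  simp_rw [norm_mul, Real.mul_rpow (norm_nonneg _) (norm_nonneg _)]
  exact hindep.integrable_mul (hX.integrable_norm_rpow hp_zero hp_top)
    (hY.integrable_norm_rpow hp_zero hp_top)

theorem integral_mul_sq_of_indepFun {X Y : Ω → ℝ} (hXY : IndepFun X Y μ)
    (hX : AEStronglyMeasurable X μ) (hY : AEStronglyMeasurable Y μ) :
    ∫ ω, (X ω * Y ω) ^ 2 ∂μ = (∫ ω, X ω ^ 2 ∂μ) * ∫ ω, Y ω ^ 2 ∂μ := by
  have hindep : IndepFun (fun ω => X ω ^ 2) (fun ω => Y ω ^ 2) μ :=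
    hXY.comp (measurable_id.pow_const 2) (measurable_id.pow_const 2)
  simp_rw [mul_pow]
  exact hindep.integral_fun_mul_eq_mul_integral (hX.pow 2) (hY.pow 2)

variable {ι : Type*} [Fintype ι]

theorem integral_sum_sq_of_pairwise_orthogonal {Z : ι → Ω → ℝ} (hZ : ∀ k, MemLp (Z k) 2 μ)
    (horth : Pairwise fun k k' => ∫ ω, Z k ω * Z k' ω ∂μ = 0) :
    ∫ ω, (∑ k, Z k ω) ^ 2 ∂μ = ∑ k, ∫ ω, Z k ω ^ 2 ∂μ := by
  have hint (k k') : Integrable (fun ω => Z k ω * Z k' ω) μ := (hZ k).integrable_mul (hZ k')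
  calc ∫ ω, (∑ k, Z k ω) ^ 2 ∂μ
      = ∫ ω, ∑ k, ∑ k', Z k ω * Z k' ω ∂μ := by simp_rw [sq, Finset.sum_mul_sum]
    _ = ∑ k, ∑ k', ∫ ω, Z k ω * Z k' ω ∂μ := by
        rw [integral_finsetSum _ fun k _ => integrable_finsetSum _ fun k' _ => hint k k']
        exact Finset.sum_congr rfl fun k _ => integral_finsetSum _ fun k' _ => hint k k'
    _ = ∑ k, ∫ ω, Z k ω ^ 2 ∂μ := by
        refine Finset.sum_congr rfl fun k _ => ?_
        rw [Fintype.sum_eq_single k fun k' hk' => horth hk'.symm]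
        simp_rw [sq]

variable {X Y : ι → Ω → ℝ}

theorem memLp_sum_mul_of_indepFun {p : ℝ≥0∞}
    (hXY : IndepFun (fun ω k => X k ω) (fun ω k => Y k ω) μ)
    (hX : ∀ k, MemLp (X k) p μ) (hY : ∀ k, MemLp (Y k) p μ) :
    MemLp (fun ω => ∑ k, X k ω * Y k ω) p μ :=
  memLp_finsetSum _ fun k _ => memLp_mul_of_indepFun
    (hXY.comp (measurable_pi_apply k) (measurable_pi_apply k)) (hX k) (hY k)

theorem integral_sum_mul_sq_of_indepFun
    (hXY : IndepFun (fun ω k => X k ω) (fun ω k => Y k ω) μ)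
    (hX : ∀ k, MemLp (X k) 2 μ) (hY : ∀ k, MemLp (Y k) 2 μ)
    (horth : Pairwise fun k k' => ∫ ω, Y k ω * Y k' ω ∂μ = 0) :
    ∫ ω, (∑ k, X k ω * Y k ω) ^ 2 ∂μ = ∑ k, (∫ ω, X k ω ^ 2 ∂μ) * ∫ ω, Y k ω ^ 2 ∂μ := by
  have hindep (k) : IndepFun (X k) (Y k) μ :=
    hXY.comp (measurable_pi_apply k) (measurable_pi_apply k)
  have hcross (k k') : ∫ ω, X k ω * Y k ω * (X k' ω * Y k' ω) ∂μ =
      (∫ ω, X k ω * X k' ω ∂μ) * ∫ ω, Y k ω * Y k' ω ∂μ := by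
    have hpair : IndepFun (fun ω => X k ω * X k' ω) (fun ω => Y k ω * Y k' ω) μ :=
      hXY.comp (φ := fun x : ι → ℝ => x k * x k') (ψ := fun y : ι → ℝ => y k * y k')
        (by fun_prop) (by fun_prop)
    simp_rw [mul_mul_mul_comm]
    exact hpair.integral_fun_mul_eq_mul_integral ((hX k).1.mul (hX k').1) ((hY k).1.mul (hY k').1)
  rw [integral_sum_sq_of_pairwise_orthogonal
    (fun k => memLp_mul_of_indepFun (hindep k) (hX k) (hY k))
    fun k k' hk => (hcross k k').trans (by rw [horth hk, mul_zero])]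
  exact Finset.sum_congr rfl fun k _ => integral_mul_sq_of_indepFun (hindep k) (hX k).1 (hY k).1

end IndepFun

theorem hasLaw_add_sqrt_mul_gaussianReal (m : ℝ) (v : ℝ≥0) :
    HasLaw (fun z => m + √v * z) (gaussianReal m v) (gaussianReal 0 1) := by
  have hvar : NNReal.mk (√v ^ 2) (sq_nonneg _) = v := NNReal.eq (Real.sq_sqrt v.coe_nonneg)
  have hid : HasLaw id (gaussianReal 0 1) (gaussianReal 0 1) := HasLaw.id
  simpa [hvar] using gaussianReal_const_add (gaussianReal_const_mul hid √v) m

/-- `ψ` stands for `φ'`; for an activation with kinks, such as the ReLU, it is `φ'` extended to the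
kinks by any choice of values. -/
theorem backprop_recursion_general
    {Ω ι : Type*} [MeasurableSpace Ω] [Fintype ι] {μ : Measure Ω} {q s : ℝ} {v : ℝ≥0}
    {ψ : ℝ → ℝ} (hψ : Measurable ψ) (hψL2 : MemLp (fun z => ψ (√v * z)) 2 (gaussianReal 0 1))
    {δ W : ι → Ω → ℝ} {h : Ω → ℝ}
    (hδL2 : ∀ k, MemLp (δ k) 2 μ) (hδmoment : ∀ k, ∫ ω, δ k ω ^ 2 ∂μ = q)
    (hWL2 : ∀ k, MemLp (W k) 2 μ) (hWmoment : ∀ k, ∫ ω, W k ω ^ 2 ∂μ = s)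
    (hWorth : Pairwise fun k k' => ∫ ω, W k ω * W k' ω ∂μ = 0)
    (hδW : IndepFun (fun ω k => δ k ω) (fun ω k => W k ω) μ)
    (hh : HasLaw h (gaussianReal 0 v) μ)
    (hhδW : IndepFun h (fun ω => (fun k => δ k ω, fun k => W k ω)) μ) :
    MemLp (fun ω => (∑ k, δ k ω * W k ω) * ψ (h ω)) 2 μ ∧
      ∫ ω, ((∑ k, δ k ω * W k ω) * ψ (h ω)) ^ 2 ∂μ =
        q * (Fintype.card ι * s) * ∫ z, ψ (√v * z) ^ 2 ∂(gaussianReal 0 1) := by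
  have hident : IdentDistrib (fun ω => ψ (h ω)) (fun z => ψ (√v * z)) μ (gaussianReal 0 1) := by
    simpa [Function.comp_def] using (hh.identDistrib (hasLaw_add_sqrt_mul_gaussianReal 0 v)).comp hψ
  have hψh : MemLp (fun ω => ψ (h ω)) 2 μ := hident.memLp_iff.2 hψL2
  have hsum : MemLp (fun ω => ∑ k, δ k ω * W k ω) 2 μ := memLp_sum_mul_of_indepFun hδW hδL2 hWL2
  have hindep : IndepFun (fun ω => ∑ k, δ k ω * W k ω) (fun ω => ψ (h ω)) μ :=
    hhδW.symm.comp (φ := fun p : (ι → ℝ) × (ι → ℝ) => ∑ k, p.1 k * p.2 k) (by fun_prop) hψ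
  refine ⟨memLp_mul_of_indepFun hindep hsum hψh, ?_⟩
  rw [integral_mul_sq_of_indepFun hindep hsum.1 hψh.1,
    integral_sum_mul_sq_of_indepFun hδW hδL2 hWL2 hWorth, hident.sq.integral_eq]
  simp only [hδmoment, hWmoment, Finset.sum_const, Finset.card_univ, nsmul_eq_mul]
  ring

/-- backpropagation recursion: with δ₁, …, δ_{N_{l+1}} identically
distributed with second moment q̃, uncorrelated weights W_k of mean 0 and second moment
γσα²/N_l independent of δ, and h ~ N(0, q*) independent of (δ, W), the backpropagated
error δ′ = (Σ_k δ_k W_k) φ′(h) satisfies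
E[(δ′)²] = q̃ (N_{l+1}/N_l) γ σα² ∫ (φ′(√q* z))² Dz = q̃ (N_{l+1}/N_l) χ_γ. -/
theorem backprop_recursion
    {Ω : Type*} [MeasurableSpace Ω] (μ : Measure Ω) [IsProbabilityMeasure μ]
    (Nl Nl1 : ℕ) (hNl1 : 0 < Nl1) (γ σα qs : ℝ)
    (hγ : γ ∈ Set.Ioc (0 : ℝ) 1) (hσα : 0 ≤ σα) (hqs : 0 < qs)
    (φ : ℝ → ℝ) (hφ : ContDiff ℝ 1 φ)
    (hint : Integrable (fun z => (deriv φ (Real.sqrt qs * z)) ^ 2) (gaussianReal 0 1))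
    (δ W : Fin Nl1 → Ω → ℝ) (h : Ω → ℝ)
    (hδmeas : ∀ k, Measurable (δ k)) (hWmeas : ∀ k, Measurable (W k))
    (hhmeas : Measurable h)
    (hδdist : ∀ k, Measure.map (δ k) μ = Measure.map (δ ⟨0, hNl1⟩) μ)
    (hδsq : Integrable (fun ω => (δ ⟨0, hNl1⟩ ω) ^ 2) μ)
    (hWsq : ∀ k, Integrable (fun ω => (W k ω) ^ 2) μ)
    (hWmean : ∀ k, (∫ ω, W k ω ∂μ) = 0)
    (hWuncorr : ∀ k k', k ≠ k' → (∫ ω, W k ω * W k' ω ∂μ) = 0)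
    (hWvar : ∀ k, (∫ ω, (W k ω) ^ 2 ∂μ) = γ * σα ^ 2 / Nl)
    (hWδindep : IndepFun (fun ω => (fun k => W k ω : Fin Nl1 → ℝ))
      (fun ω => (fun k => δ k ω : Fin Nl1 → ℝ)) μ)
    (hhdist : Measure.map h μ = gaussianReal 0 (Real.toNNReal qs))
    (hhindep : IndepFun h
      (fun ω => ((fun k => δ k ω : Fin Nl1 → ℝ), (fun k => W k ω : Fin Nl1 → ℝ))) μ) :
    ∫ ω, ((∑ k, δ k ω * W k ω) * deriv φ (h ω)) ^ 2 ∂μ =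
      (∫ ω, (δ ⟨0, hNl1⟩ ω) ^ 2 ∂μ) * ((Nl1 : ℝ) / Nl) *
        (γ * σα ^ 2 * ∫ z, (deriv φ (Real.sqrt qs * z)) ^ 2 ∂(gaussianReal 0 1)) := by
  lift qs to ℝ≥0 using hqs.le
  rw [Real.toNNReal_coe] at hhdist
  have hident (k) : IdentDistrib (δ k) (δ ⟨0, hNl1⟩) μ μ :=
    ⟨(hδmeas k).aemeasurable, (hδmeas _).aemeasurable, hδdist k⟩
  have hδL2 : MemLp (δ ⟨0, hNl1⟩) 2 μ :=
    (memLp_two_iff_integrable_sq (hδmeas _).aestronglyMeasurable).2 hδsq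
  have hWL2 (k) : MemLp (W k) 2 μ :=
    (memLp_two_iff_integrable_sq (hWmeas k).aestronglyMeasurable).2 (hWsq k)
  have hφL2 : MemLp (fun z => deriv φ (√qs * z)) 2 (gaussianReal 0 1) :=
    (memLp_two_iff_integrable_sq (by fun_prop)).2 hint
  rw [(backprop_recursion_general (measurable_deriv φ) hφL2 (fun k => (hident k).memLp_iff.2 hδL2)
    (fun k => (hident k).sq.integral_eq) hWL2 hWvar hWuncorr hWδindep.symm
    ⟨hhmeas.aemeasurable, hhdist⟩ hhindep).2, Fintype.card_fin]
  ring
end
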